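/- arXiv:2508.15714 — 4 statements merged into one kernel-verified Lean document; each statement's English description precedes it below -/
import Mathlib

section
/- Let V be a complex vector space of dimension 2n with a nondegenerate symmetric bilinear form g. For each maximal isotropic subspace W ⊆ V, the map Λ^n W ⊗ Λ^n(V/W) → ℂ sending w_1∧⋯∧w_n ⊗ (v_1+W)∧⋯∧(v_n+W) to det(g(w_a, v_b))_{a,b} is an isomorphism, and composing it with the canonical isomorphism Λ^{2n}V ≅ Λ^n W ⊗ Λ^n(V/W) coming from the exact sequence 0 → W → V → V/W → 0 defines a framing α_W : Λ^{2n}V ≅ ℂ. If A is an orthogonal transformation of (V, g) (i.e., g(Ax, Ay) = g(x, y) for all x, y) carrying a maximal isotropic subspace W_1 onto a maximal isotropic subspace W_2, then α_{W_2} ∘ Λ^{2n}A = α_{W_1}, hence α_{W_2} = det(A)^{−1}·α_{W_1}; in particular, if det A = −1 then α_{W_1} = −α_{W_2}. -/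
/-!
Statement 2 (paper's Lemma "Volume form"):
Let `V` be a complex vector space of dimension `2n` with a nondegenerate symmetric
bilinear form `g`.  Each maximal isotropic subspace `W ⊆ V` induces a framing
`α_W : Λ^{2n} V ≅ ℂ`, characterized by
`α_W (w₁ ∧ ⋯ ∧ wₙ ∧ v₁ ∧ ⋯ ∧ vₙ) = det (g (w_a, v_b))` for `w_a ∈ W`, `v_b ∈ V`
(this is the composition of the canonical isomorphism
`Λ^{2n} V ≅ Λ^n W ⊗ Λ^n (V/W)` with the determinant pairing, which is an
isomorphism).  Such an `α_W` exists and is unique, and is bijective.  If `A` is an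
orthogonal transformation of `(V, g)` carrying a maximal isotropic `W₁` onto a
maximal isotropic `W₂`, then `α_{W₂} ∘ Λ^{2n} A = α_{W₁}`; in particular if
`det A = -1` then `α_{W₁} = -α_{W₂}`.
-/

open ExteriorAlgebra

noncomputable section

/-- The wedge `v₁ ∧ ⋯ ∧ vₙ`, as an element of the `n`-th exterior power `⋀[ℂ]^n V`. -/
def wedge {V : Type*} [AddCommGroup V] [Module ℂ V] (n : ℕ) (v : Fin n → V) :
    ↥(⋀[ℂ]^n V) :=
  ⟨ExteriorAlgebra.ιMulti ℂ n v, ExteriorAlgebra.ιMulti_range ℂ n (Set.mem_range_self v)⟩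

/-- `α` is the framing of `Λ^{2n} V` attached to the maximal isotropic subspace `W`:
it is the composition of the canonical isomorphism `Λ^{2n}V ≅ Λ^n W ⊗ Λ^n (V/W)` with
the pairing `Λ^n W ⊗ Λ^n (V/W) → ℂ`, `w₁∧⋯∧wₙ ⊗ v̄₁∧⋯∧v̄ₙ ↦ det (g (w_a, v_b))`;
equivalently, it takes the stated value on every wedge `w₁∧⋯∧wₙ∧v₁∧⋯∧vₙ` with the
`w_a` in `W`. -/
def IsFraming {V : Type*} [AddCommGroup V] [Module ℂ V] (n : ℕ)
    (g : V →ₗ[ℂ] V →ₗ[ℂ] ℂ) (W : Submodule ℂ V)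
    (α : ↥(⋀[ℂ]^(n + n) V) →ₗ[ℂ] ℂ) : Prop :=
  ∀ (w : Fin n → W) (v : Fin n → V),
    α (wedge (n + n) (Fin.append (fun a => ((w a : V))) v)) =
      Matrix.det (Matrix.of fun a b => g ((w a : V)) (v b))

theorem exists_adapted_basis
    (n : ℕ) {V : Type*} [AddCommGroup V] [Module ℂ V] [FiniteDimensional ℂ V]
    (hdim : Module.finrank ℂ V = n + n)
    (g : V →ₗ[ℂ] V →ₗ[ℂ] ℂ)
    (hnondeg : ∀ v : V, (∀ w : V, g v w = 0) → v = 0)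
    (W : Submodule ℂ V) (hW : ∀ w ∈ W, ∀ w' ∈ W, g w w' = 0)
    (hn : Module.finrank ℂ W = n) :
    ∃ (c : Module.Basis (Fin n) ℂ W) (b : Module.Basis (Fin n ⊕ Fin n) ℂ V),
      (∀ i, b (Sum.inl i) = c i) ∧
      (∀ i j, g (c i) (b (Sum.inr j)) = if i = j then 1 else 0) ∧
      (∀ i x, b.repr x (Sum.inr i) = g (c i) x) := by
  let c : Module.Basis (Fin n) ℂ W := Module.finBasisOfFinrankEq ℂ W hn
  let φ : V →ₗ[ℂ] (Fin n → ℂ) := LinearMap.pi fun i => g (c i)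
  have hinj : Function.Injective (g ∘ₗ W.subtype) := by
    rw [← LinearMap.ker_eq_bot, LinearMap.ker_eq_bot']
    intro w hw
    apply Subtype.ext
    apply hnondeg
    intro v
    exact LinearMap.congr_fun hw v
  have hli : LinearIndependent ℂ (fun i => g (c i : V)) :=
    c.linearIndependent.map' (g ∘ₗ W.subtype) (LinearMap.ker_eq_bot.2 hinj)
  have hsurj : Function.Surjective φ := by
    rw [← LinearMap.range_eq_top]
    by_contra hne
    obtain ⟨f, hf0, hf⟩ := Submodule.exists_le_ker_of_lt_top _ (lt_top_iff_ne_top.2 hne)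
    apply hf0
    have h1 : ∑ i, f (Pi.single i 1) • g (c i : V) = 0 := by
      ext v
      have h2 : f (φ v) = 0 := hf ⟨v, rfl⟩
      rw [LinearMap.pi_apply_eq_sum_univ f] at h2
      simp only [LinearMap.sum_apply, LinearMap.smul_apply, smul_eq_mul, LinearMap.zero_apply]
      rw [← h2]
      refine Finset.sum_congr rfl fun i _ => ?_
      simp only [φ, LinearMap.pi_apply, smul_eq_mul]
      rw [mul_comm]
      congr 2
      ext j
      simp [Pi.single_apply, eq_comm]
    have h3 := Fintype.linearIndependent_iff.1 hli _ h1
    refine LinearMap.pi_ext' fun i => ?_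
    ext
    simpa using h3 i
  choose v hv using fun j : Fin n => hsurj (Pi.single j 1)
  have hgv : ∀ i j, g (c i) (v j) = if i = j then 1 else 0 := by
    intro i j
    have := congrFun (hv j) i
    simpa [φ, Pi.single_apply] using this
  have hgw : ∀ i j, g (c i) (c j) = 0 := fun i j => hW _ (c i).2 _ (c j).2
  have hb : LinearIndependent ℂ (Sum.elim (fun i => (c i : V)) v) := by
    rw [Fintype.linearIndependent_iff]
    intro d hd
    rw [Fintype.sum_sum_type] at hd
    simp only [Sum.elim_inl, Sum.elim_inr] at hd
    have hr : ∀ i, d (Sum.inr i) = 0 := by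
      intro i
      have := congrArg (g (c i)) hd
      simpa [hgv, hgw] using this
    have hl : ∑ i, d (Sum.inl i) • c i = 0 := by
      apply Subtype.ext
      simpa [hr] using hd
    have hl' := Fintype.linearIndependent_iff.1 c.linearIndependent _ hl
    rintro (i | i)
    · exact hl' i
    · exact hr i
  let b := basisOfLinearIndependentOfCardEqFinrank' _ hb (by simp [hdim])
  have hbl : ∀ i, b (Sum.inl i) = c i := by intro i; simp [b]
  have hbr : ∀ i, b (Sum.inr i) = v i := by intro i; simp [b]
  refine ⟨c, b, hbl, by intro i j; rw [hbr, hgv], ?_⟩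
  intro i x
  conv_rhs => rw [← b.sum_repr x, Fintype.sum_sum_type]
  simp [hbl, hbr, hgv, hgw]

theorem basis_det_append
    (n : ℕ) {V : Type*} [AddCommGroup V] [Module ℂ V]
    (g : V →ₗ[ℂ] V →ₗ[ℂ] ℂ)
    (W : Submodule ℂ V) (hW : ∀ w ∈ W, ∀ w' ∈ W, g w w' = 0)
    (c : Module.Basis (Fin n) ℂ W) (b : Module.Basis (Fin n ⊕ Fin n) ℂ V)
    (hbl : ∀ i, b (Sum.inl i) = c i)
    (hr : ∀ i x, b.repr x (Sum.inr i) = g (c i) x)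
    (w : Fin n → W) (v : Fin n → V) :
    b.det (Fin.append (fun a => ((w a : V))) v ∘ finSumFinEquiv) =
      Matrix.det (Matrix.of fun a b => g ((w a : V)) (v b)) := by
  have hl : ∀ i (x : W), b.repr (x : V) (Sum.inl i) = c.repr x i := by
    intro i x
    have h : (x : V) = ∑ j, c.repr x j • b (Sum.inl j) := by
      have hx := congrArg W.subtype (c.sum_repr x)
      rw [map_sum] at hx
      simp only [map_smul, Submodule.subtype_apply] at hx
      simp only [hbl]
      exact hx.symm
    rw [h]
    simp [Finsupp.single_apply]
  have hM : b.toMatrix (Fin.append (fun a => ((w a : V))) v ∘ finSumFinEquiv) =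
      Matrix.fromBlocks (c.toMatrix w) (Matrix.of fun i j => b.repr (v j) (Sum.inl i)) 0
        (Matrix.of fun i j => g (c i) (v j)) := by
    ext (i | i) (j | j)
    · simp [Module.Basis.toMatrix_apply, hl]
    · simp [Module.Basis.toMatrix_apply, -Fin.natAdd_eq_addNat]
    · simp [Module.Basis.toMatrix_apply, hr, hW _ (c i).2 _ (w j).2]
    · simp [Module.Basis.toMatrix_apply, hr, -Fin.natAdd_eq_addNat]
  rw [Module.Basis.det_apply, hM, Matrix.det_fromBlocks_zero₂₁, ← Matrix.det_transpose,
    ← Matrix.det_mul]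
  congr 1
  ext i j
  simp only [Matrix.mul_apply, Matrix.transpose_apply, Matrix.of_apply,
    Module.Basis.toMatrix_apply]
  have hx := congrArg (fun y => g (W.subtype y) (v j)) (c.sum_repr (w i))
  simp only [map_sum, map_smul, Submodule.subtype_apply, LinearMap.sum_apply,
    LinearMap.smul_apply, smul_eq_mul] at hx
  exact hx

theorem framing_iff
    (n : ℕ) {V : Type*} [AddCommGroup V] [Module ℂ V] [FiniteDimensional ℂ V]
    (hdim : Module.finrank ℂ V = n + n)
    (g : V →ₗ[ℂ] V →ₗ[ℂ] ℂ)
    (hnondeg : ∀ v : V, (∀ w : V, g v w = 0) → v = 0)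
    (W : Submodule ℂ V) (hW : ∀ w ∈ W, ∀ w' ∈ W, g w w' = 0)
    (hn : Module.finrank ℂ W = n) :
    ∃ b : Module.Basis (Fin (n + n)) ℂ V, ∀ α : ↥(⋀[ℂ]^(n + n) V) →ₗ[ℂ] ℂ,
      IsFraming n g W α ↔ α = exteriorPower.alternatingMapLinearEquiv b.det := by
  obtain ⟨c, b, hbl, hg, hr⟩ := exists_adapted_basis n hdim g hnondeg W hW hn
  have key := basis_det_append n g W hW c b hbl hr
  refine ⟨b.reindex finSumFinEquiv, fun α => ⟨fun h => ?_, fun h => ?_⟩⟩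
  · apply exteriorPower.linearMap_ext
    rw [exteriorPower.alternatingMapLinearEquiv_comp_ιMulti]
    refine Module.Basis.ext_alternating (b.reindex finSumFinEquiv) ?_
    intro σ hσ
    obtain ⟨τ, rfl⟩ : ∃ τ : Equiv.Perm (Fin (n + n)), σ = τ :=
      ⟨Equiv.ofBijective σ (Finite.injective_iff_bijective.1 hσ), rfl⟩
    have e : (fun i => (b.reindex finSumFinEquiv) (τ i)) = (b.reindex finSumFinEquiv) ∘ τ := rfl
    rw [e, AlternatingMap.map_perm, AlternatingMap.map_perm, Module.Basis.det_self]
    congr 1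
    have h1 := h c (fun i => b (Sum.inr i))
    have h2 : Fin.append (fun a => ((c a : V))) (fun i => b (Sum.inr i)) =
        b.reindex finSumFinEquiv := by
      ext i
      refine Fin.addCases (fun i => ?_) (fun i => ?_) i <;> simp [hbl, -Fin.natAdd_eq_addNat]
    rw [h2] at h1
    refine h1.trans ?_
    convert Matrix.det_one (n := Fin n) (R := ℂ)
    ext i j
    simp [hg, Matrix.one_apply]
  · subst h
    intro w v
    rw [← key, ← Module.Basis.det_reindex]
    exact exteriorPower.alternatingMapLinearEquiv_apply_ιMulti _ _

theorem framing_of_maximal_isotropic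
    (n : ℕ) (V : Type*) [AddCommGroup V] [Module ℂ V] [FiniteDimensional ℂ V]
    (hdim : Module.finrank ℂ V = n + n)
    (g : V →ₗ[ℂ] V →ₗ[ℂ] ℂ)
    (hsymm : ∀ x y : V, g x y = g y x)
    (hnondeg : ∀ v : V, (∀ w : V, g v w = 0) → v = 0) :
    -- (1) every maximal isotropic subspace `W` determines a unique framing `α_W`,
    (∀ W : Submodule ℂ V,
      (∀ w ∈ W, ∀ w' ∈ W, g w w' = 0) → Module.finrank ℂ W = n →
      ∃! α : ↥(⋀[ℂ]^(n + n) V) →ₗ[ℂ] ℂ, IsFraming n g W α)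
    ∧
    -- (2) any such framing is an isomorphism `Λ^{2n} V ≅ ℂ`,
    (∀ W : Submodule ℂ V,
      (∀ w ∈ W, ∀ w' ∈ W, g w w' = 0) → Module.finrank ℂ W = n →
      ∀ α : ↥(⋀[ℂ]^(n + n) V) →ₗ[ℂ] ℂ, IsFraming n g W α →
        Function.Bijective α)
    ∧
    -- (3) if `A` is orthogonal for `g` and maps the maximal isotropic `W₁` onto the
    -- maximal isotropic `W₂`, then `α_{W₂} ∘ Λ^{2n} A = α_{W₁}` (checked on the
    -- spanning wedges `u₁ ∧ ⋯ ∧ u_{2n} ↦ A u₁ ∧ ⋯ ∧ A u_{2n}`), and if moreover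
    -- `det A = -1` then `α_{W₁} = -α_{W₂}`.
    (∀ (W₁ W₂ : Submodule ℂ V),
      (∀ w ∈ W₁, ∀ w' ∈ W₁, g w w' = 0) → Module.finrank ℂ W₁ = n →
      (∀ w ∈ W₂, ∀ w' ∈ W₂, g w w' = 0) → Module.finrank ℂ W₂ = n →
      ∀ α₁ α₂ : ↥(⋀[ℂ]^(n + n) V) →ₗ[ℂ] ℂ,
        IsFraming n g W₁ α₁ → IsFraming n g W₂ α₂ →
        ∀ A : V ≃ₗ[ℂ] V,
          (∀ x y : V, g (A x) (A y) = g x y) →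
          W₁.map (A : V →ₗ[ℂ] V) = W₂ →
          (∀ u : Fin (n + n) → V,
            α₂ (wedge (n + n) (fun k => A (u k))) = α₁ (wedge (n + n) u))
          ∧ (LinearMap.det (A : V →ₗ[ℂ] V) = -1 → α₁ = -α₂)) := by
  refine ⟨?_, ?_, ?_⟩
  · intro W hW hn
    obtain ⟨b, hb⟩ := framing_iff n hdim g hnondeg W hW hn
    exact ⟨_, (hb _).2 rfl, fun y hy => (hb y).1 hy⟩
  · intro W hW hn α hα
    obtain ⟨b, hb⟩ := framing_iff n hdim g hnondeg W hW hn
    have h := (hb α).1 hα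
    have h1 : α (exteriorPower.ιMulti ℂ (n + n) b) = 1 := by
      rw [h, exteriorPower.alternatingMapLinearEquiv_apply_ιMulti, Module.Basis.det_self]
    have hs : Function.Surjective α := fun z =>
      ⟨z • exteriorPower.ιMulti ℂ (n + n) b, by rw [map_smul, h1, smul_eq_mul, mul_one]⟩
    refine ⟨(LinearMap.injective_iff_surjective_of_finrank_eq_finrank ?_).2 hs, hs⟩
    rw [exteriorPower.finrank_eq, hdim, Nat.choose_self, Module.finrank_self]
  · intro W₁ W₂ hW₁ hn₁ hW₂ hn₂ α₁ α₂ hα₁ hα₂ A hA hAW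
    obtain ⟨b₁, hb₁⟩ := framing_iff n hdim g hnondeg W₁ hW₁ hn₁
    obtain ⟨b₂, hb₂⟩ := framing_iff n hdim g hnondeg W₂ hW₂ hn₂
    have hmap : ∀ u : Fin (n + n) → V,
        exteriorPower.map (n + n) (A : V →ₗ[ℂ] V) (wedge (n + n) u) =
          wedge (n + n) (fun k => A (u k)) := fun u =>
      exteriorPower.map_apply_ιMulti (A : V →ₗ[ℂ] V) u
    have hfr : IsFraming n g W₁ (α₂ ∘ₗ exteriorPower.map (n + n) (A : V →ₗ[ℂ] V)) := by
      intro w v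
      have hm : ∀ a, A (w a : V) ∈ W₂ := fun a => hAW ▸ Submodule.mem_map_of_mem (w a).2
      have h := hα₂ (fun a => ⟨A (w a), hm a⟩) (fun b => A (v b))
      simp only [hA] at h
      rw [LinearMap.comp_apply, hmap, ← h]
      congr 2
      ext i
      refine Fin.addCases (fun i => ?_) (fun i => ?_) i <;> simp [-Fin.natAdd_eq_addNat]
    have heq : α₂ ∘ₗ exteriorPower.map (n + n) (A : V →ₗ[ℂ] V) = α₁ :=
      ((hb₁ _).1 hfr).trans ((hb₁ _).1 hα₁).symm
    have h1 : ∀ u : Fin (n + n) → V,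
        α₂ (wedge (n + n) (fun k => A (u k))) = α₁ (wedge (n + n) u) := by
      intro u
      rw [← heq, LinearMap.comp_apply, hmap]
    refine ⟨h1, fun hdet => ?_⟩
    apply exteriorPower.linearMap_ext
    ext u
    have h2 : ∀ u, α₂ (wedge (n + n) u) = b₂.det u := by
      intro u
      rw [(hb₂ α₂).1 hα₂]
      exact exteriorPower.alternatingMapLinearEquiv_apply_ιMulti _ _
    have h3 : α₁ (wedge (n + n) u) = - α₂ (wedge (n + n) u) := by
      rw [← h1, h2, h2]
      have := Module.Basis.det_comp b₂ (A : V →ₗ[ℂ] V) u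
      rw [hdet, neg_one_mul] at this
      exact this
    exact h3


end
end

section
/- Let m ≥ 1 and let V be a complex vector space of dimension 4m equipped with a nondegenerate symmetric bilinear form g and a linear endomorphism e satisfying g(e x, y) + g(x, e y) = 0 for all x, y ∈ V, e^{2m} = 0, and dim ker e = 2 (so e is nilpotent of Jordan type [2m, 2m]). Suppose K_1 and K_2 are subspaces of V such that, for s = 1, 2, K_s is spanned by v_s, e v_s, …, e^{2m−1} v_s for some vector v_s ∈ V, dim K_s = 2m, and g vanishes identically on K_s × K_s (i.e., K_s is maximal isotropic). Then dim(K_1 ∩ K_2) is even. -/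
open Polynomial in
theorem aux_dvd {V : Type*} [AddCommGroup V] [Module ℂ V] (e : Module.End ℂ V) (N : ℕ)
    (hnil : e ^ N = 0) (S : Submodule ℂ V) (hS : ∀ x ∈ S, e x ∈ S) (v : V) (p : ℂ[X])
    (hp : aeval e p v ∈ S) (k : ℕ) (hk : ∀ j < k, (e ^ j) v ∉ S) : (X : ℂ[X]) ^ k ∣ p := by
  have hSp : ∀ (q : ℂ[X]) (x : V), x ∈ S → aeval e q x ∈ S := by
    intro q x hx
    have hpow : ∀ i : ℕ, (e ^ i) x ∈ S := by
      intro i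
      induction i with
      | zero => simpa using hx
      | succ i ih => rw [pow_succ', Module.End.mul_apply]; exact hS _ ih
    rw [aeval_eq_sum_range, LinearMap.sum_apply]
    refine Submodule.sum_mem _ fun i _ => ?_
    rw [LinearMap.smul_apply]
    exact Submodule.smul_mem _ _ (hpow i)
  by_cases h0 : p = 0
  · simp [h0]
  obtain ⟨q, hq, hnd⟩ := exists_eq_pow_rootMultiplicity_mul_and_not_dvd p h0 0
  simp only [map_zero, sub_zero] at hq hnd
  set i := rootMultiplicity 0 p
  have hc : IsCoprime (X ^ N : ℂ[X]) q :=
    ((irreducible_X.coprime_iff_not_dvd).mpr hnd).pow_left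
  obtain ⟨a, b, hab⟩ := hc
  have h1 : (e ^ i) v ∈ S := by
    have := hSp b _ hp
    rw [← Module.End.mul_apply, ← map_mul] at this
    have h2 : b * p = X ^ i - a * X ^ i * X ^ N := by
      rw [hq]
      linear_combination X ^ i * hab
    rw [h2] at this
    simpa [hnil] using this
  have : k ≤ i := by
    by_contra hh
    exact hk i (by omega) h1
  exact (pow_dvd_pow X this).trans ⟨q, hq⟩

theorem aux_rank {V : Type*} [AddCommGroup V] [Module ℂ V] [FiniteDimensional ℂ V]
    (e : Module.End ℂ V) (hker : Module.finrank ℂ (LinearMap.ker e) = 2) (k : ℕ) :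
    Module.finrank ℂ V ≤ Module.finrank ℂ (LinearMap.range (e ^ k)) + 2 * k := by
  induction k with
  | zero => rw [pow_zero, Module.End.one_eq_id, LinearMap.range_id, finrank_top]; omega
  | succ k ih =>
    set S := LinearMap.range (e ^ k)
    have h1 := LinearMap.finrank_range_add_finrank_ker (e.domRestrict S)
    have h2 : LinearMap.range (e.domRestrict S) = LinearMap.range (e ^ (k+1)) := by
      rw [LinearMap.range_domRestrict, pow_succ', Module.End.mul_eq_comp, LinearMap.range_comp]
    have h3 : Module.finrank ℂ (LinearMap.ker (e.domRestrict S)) ≤ 2 := by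
      rw [← hker, ← Submodule.finrank_map_subtype_eq]
      apply Submodule.finrank_mono
      rintro _ ⟨y, hy, rfl⟩
      exact hy
    rw [h2] at h1
    omega

theorem aux_ker {V : Type*} [AddCommGroup V] [Module ℂ V] [FiniteDimensional ℂ V]
    (e : Module.End ℂ V) (hker : Module.finrank ℂ (LinearMap.ker e) = 2) (k d : ℕ)
    (hdim : Module.finrank ℂ V = 2 * (k + d)) (hnil : e ^ (k + d) = 0) :
    LinearMap.range (e ^ d) = LinearMap.ker (e ^ k) := by
  apply Submodule.eq_of_le_of_finrank_le
  · rintro _ ⟨x, rfl⟩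
    rw [LinearMap.mem_ker, ← Module.End.mul_apply, ← pow_add, hnil]; rfl
  · have h1 := aux_rank e hker k
    have h2 := aux_rank e hker d
    have h3 := LinearMap.finrank_range_add_finrank_ker (e ^ k)
    omega

theorem aux_skew {V : Type*} [AddCommGroup V] [Module ℂ V] (e : Module.End ℂ V)
    (g : V →ₗ[ℂ] V →ₗ[ℂ] ℂ) (hskew : ∀ x y : V, g (e x) y + g x (e y) = 0) (j : ℕ) :
    ∀ x y, g ((e ^ j) x) y = (-1) ^ j * g x ((e ^ j) y) := by
  induction j with
  | zero => simp
  | succ j ih =>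
    intro x y
    have h1 : (e ^ (j + 1)) x = (e ^ j) (e x) := by rw [pow_succ]; rfl
    have h2 : (e ^ (j + 1)) y = e ((e ^ j) y) := by rw [pow_succ']; rfl
    rw [h1, h2, ih, eq_neg_of_add_eq_zero_left (hskew x _)]
    ring

open Polynomial in
theorem aux_cyc {V : Type*} [AddCommGroup V] [Module ℂ V] (e : Module.End ℂ V) (N : ℕ)
    (hnil : e ^ N = 0) (v : V) (x : V) :
    x ∈ Submodule.span ℂ (Set.range fun k : Fin N => (e ^ (k : ℕ)) v) ↔
      ∃ p : ℂ[X], aeval e p v = x := by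
  constructor
  · intro hx
    induction hx using Submodule.span_induction with
    | mem x h => obtain ⟨k, rfl⟩ := h; exact ⟨X ^ (k : ℕ), by simp⟩
    | zero => exact ⟨0, by simp⟩
    | add x y _ _ hx hy =>
      obtain ⟨p, rfl⟩ := hx
      obtain ⟨q, rfl⟩ := hy
      exact ⟨p + q, by simp⟩
    | smul a x _ hx =>
      obtain ⟨p, rfl⟩ := hx
      exact ⟨C a * p, by simp [Algebra.algebraMap_eq_smul_one]⟩
  · rintro ⟨p, rfl⟩
    rw [aeval_eq_sum_range, LinearMap.sum_apply]
    refine Submodule.sum_mem _ fun i _ => ?_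
    rw [LinearMap.smul_apply]
    refine Submodule.smul_mem _ _ ?_
    by_cases hi : i < N
    · exact Submodule.subset_span ⟨⟨i, hi⟩, rfl⟩
    · rw [pow_eq_zero_of_le (by omega) hnil]; simp

open Polynomial in
theorem even_intersection_of_maximal_isotropic_cyclic
    (m : ℕ) (hm : 1 ≤ m)
    (V : Type*) [AddCommGroup V] [Module ℂ V] [FiniteDimensional ℂ V]
    (hdim : Module.finrank ℂ V = 4 * m)
    (g : V →ₗ[ℂ] V →ₗ[ℂ] ℂ)
    (hsymm : ∀ x y : V, g x y = g y x)
    (hnondeg : ∀ v : V, (∀ w : V, g v w = 0) → v = 0)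
    (e : Module.End ℂ V)
    (hskew : ∀ x y : V, g (e x) y + g x (e y) = 0)
    (hnil : e ^ (2 * m) = 0)
    (hker : Module.finrank ℂ (LinearMap.ker e) = 2)
    (v₁ v₂ : V) (K₁ K₂ : Submodule ℂ V)
    (hK₁ : K₁ = Submodule.span ℂ (Set.range fun k : Fin (2 * m) => (e ^ (k : ℕ)) v₁))
    (hK₂ : K₂ = Submodule.span ℂ (Set.range fun k : Fin (2 * m) => (e ^ (k : ℕ)) v₂))
    (hdim₁ : Module.finrank ℂ K₁ = 2 * m)
    (hdim₂ : Module.finrank ℂ K₂ = 2 * m)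
    (hiso₁ : ∀ x ∈ K₁, ∀ y ∈ K₁, g x y = 0)
    (hiso₂ : ∀ x ∈ K₂, ∀ y ∈ K₂, g x y = 0) :
    Even (Module.finrank ℂ ↥(K₁ ⊓ K₂)) := by
  have mem₁ : ∀ x, x ∈ K₁ ↔ ∃ p : ℂ[X], aeval e p v₁ = x := by
    intro x; rw [hK₁]; exact aux_cyc e _ hnil v₁ x
  have mem₂ : ∀ x, x ∈ K₂ ↔ ∃ p : ℂ[X], aeval e p v₂ = x := by
    intro x; rw [hK₂]; exact aux_cyc e _ hnil v₂ x
  have li₁ : LinearIndependent ℂ (fun k : Fin (2 * m) => (e ^ (k : ℕ)) v₁) := by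
    rw [linearIndependent_iff_card_eq_finrank_span, Set.finrank, ← hK₁, hdim₁, Fintype.card_fin]
  have li₂ : LinearIndependent ℂ (fun k : Fin (2 * m) => (e ^ (k : ℕ)) v₂) := by
    rw [linearIndependent_iff_card_eq_finrank_span, Set.finrank, ← hK₂, hdim₂, Fintype.card_fin]
  have inv₁ : ∀ j, ∀ x ∈ K₁, (e ^ j) x ∈ K₁ := by
    intro j x hx
    obtain ⟨p, rfl⟩ := (mem₁ x).1 hx
    exact (mem₁ _).2 ⟨X ^ j * p, by simp⟩
  have inv₂ : ∀ j, ∀ x ∈ K₂, (e ^ j) x ∈ K₂ := by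
    intro j x hx
    obtain ⟨p, rfl⟩ := (mem₂ x).1 hx
    exact (mem₂ _).2 ⟨X ^ j * p, by simp⟩
  have hv₁ : v₁ ∈ K₁ := (mem₁ _).2 ⟨1, by simp⟩
  have hz : ∀ n, 2 * m ≤ n → ∀ x, (e ^ n) x = 0 := by
    intro n hn x
    rw [pow_eq_zero_of_le hn hnil]; rfl
  have add : ∀ a b x, (e ^ a) ((e ^ b) x) = (e ^ (a + b)) x := by
    intro a b x; rw [pow_add]; rfl
  classical
  have hex : ∃ k, (e ^ k) v₁ ∈ K₂ := ⟨2 * m, by rw [hnil]; simp⟩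
  obtain ⟨k, hkmem, hkmin⟩ : ∃ k, (e ^ k) v₁ ∈ K₂ ∧ ∀ j < k, (e ^ j) v₁ ∉ K₂ :=
    ⟨Nat.find hex, Nat.find_spec hex, fun j hj => Nat.find_min hex hj⟩
  have hk2m : k ≤ 2 * m := by
    by_contra h
    exact hkmin (2 * m) (by omega) (by rw [hnil]; simp)
  obtain ⟨d, hd⟩ : ∃ d, k + d = 2 * m := ⟨2 * m - k, by omega⟩
  have hI : K₁ ⊓ K₂ = Submodule.span ℂ (Set.range fun j : Fin d => (e ^ (k + (j : ℕ))) v₁) := by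
    apply le_antisymm
    · rintro x ⟨hx1, hx2⟩
      obtain ⟨p, rfl⟩ := (mem₁ x).1 hx1
      obtain ⟨q, rfl⟩ := aux_dvd e _ hnil K₂ (by simpa using inv₂ 1) v₁ p hx2 k hkmin
      rw [mul_comm, map_mul, Module.End.mul_apply, aeval_eq_sum_range, LinearMap.sum_apply]
      refine Submodule.sum_mem _ fun i _ => ?_
      rw [LinearMap.smul_apply]
      refine Submodule.smul_mem _ _ ?_
      rw [map_pow, aeval_X, add, add_comm]
      by_cases hi : i < d
      · exact Submodule.subset_span ⟨⟨i, hi⟩, rfl⟩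
      · rw [hz _ (by omega)]; simp
    · rw [Submodule.span_le]
      rintro _ ⟨j, rfl⟩
      refine ⟨inv₁ _ _ hv₁, ?_⟩
      simp only
      rw [add_comm, ← add]
      exact inv₂ _ _ hkmem
  have hfin : Module.finrank ℂ ↥(K₁ ⊓ K₂) = d := by
    rw [hI, finrank_span_eq_card, Fintype.card_fin]
    exact li₁.comp (fun j : Fin d => (⟨k + j, by omega⟩ : Fin (2 * m)))
      (fun a b h => by simpa [Fin.ext_iff] using h)
  rw [hfin]
  by_contra hodd
  rw [Nat.not_even_iff_odd] at hodd
  obtain ⟨d', hd'⟩ := hodd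
  obtain ⟨j, hj⟩ : ∃ j, k = j + 1 := ⟨k - 1, by omega⟩
  have hjd : j + d = 2 * m - 1 := by omega
  -- the vector v'
  obtain ⟨p, hp⟩ := (mem₂ _).1 hkmem
  have hdvd : (X : ℂ[X]) ^ (2 * m) ∣ X ^ d * p := by
    refine aux_dvd e _ hnil ⊥ (by simp) v₂ _ ?_ _ ?_
    · simp [hp, add, hz (d + k) (by omega)]
    · intro i hi
      simpa using li₂.ne_zero ⟨i, hi⟩
  obtain ⟨q, rfl⟩ : (X : ℂ[X]) ^ k ∣ p := by
    rw [← hd, add_comm, pow_add] at hdvd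
    exact (mul_dvd_mul_iff_left (pow_ne_zero _ X_ne_zero)).1 hdvd
  set v' := aeval e q v₂ with hv'
  have hv'K : v' ∈ K₂ := (mem₂ _).2 ⟨q, rfl⟩
  have hkv : (e ^ k) (v' - v₁) = 0 := by
    rw [map_sub, ← hp]; simp [hv']
  obtain ⟨w, hw⟩ : v' - v₁ ∈ LinearMap.range (e ^ d) := by
    rw [aux_ker e hker k d (by omega) (by rw [hd, hnil])]
    exact hkv
  have hw' : v' = v₁ + (e ^ d) w := by rw [hw]; abel
  have sk := aux_skew e g hskew
  have hb : g v₁ ((e ^ (2 * m - 1)) w) = 0 := by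
    have h := hiso₂ _ hv'K _ (inv₂ j _ hv'K)
    have h1 := hiso₁ _ hv₁ _ (inv₁ j _ hv₁)
    have h3 : g ((e ^ d) w) ((e ^ j) v₁) = g v₁ ((e ^ (2 * m - 1)) w) := by
      rw [sk, add, hsymm v₁, sk, add_comm d, hjd]
      rw [Odd.neg_one_pow ⟨d', hd'⟩, Odd.neg_one_pow ⟨m - 1, by omega⟩]
    have h4 : g ((e ^ d) w) ((e ^ (2 * m - 1)) w) = 0 := by
      rw [sk, add, hz _ (by omega)]; simp
    rw [hw'] at h
    simp only [map_add, LinearMap.add_apply, add, hjd, h1, h3, h4] at h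
    linear_combination h / 2
  set a := (e ^ (2 * m - 1)) v₁ with ha
  set b := (e ^ (2 * m - 1)) w with hbdef
  have ha0 : a ≠ 0 := li₁.ne_zero ⟨2 * m - 1, by omega⟩
  have haker : ∀ x, (e ^ (2 * m - 1)) x ∈ LinearMap.ker e := by
    intro x
    have := add 1 (2 * m - 1) x
    rw [pow_one] at this
    rw [LinearMap.mem_ker, this, hz _ (by omega)]
  have hind : LinearIndependent ℂ ![a, b] := by
    rw [LinearIndependent.pair_iff' ha0]
    intro c hc
    apply hkmin j (by omega)
    have h1 : (e ^ j) v' = (e ^ j) v₁ + c • a := by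
      rw [hw', map_add, add, hjd, hc]
    rw [eq_sub_of_add_eq h1.symm]
    refine K₂.sub_mem (inv₂ _ _ hv'K) (K₂.smul_mem _ ?_)
    rw [ha, show 2 * m - 1 = (2 * m - 1 - k) + k by omega, ← add]
    exact inv₂ _ _ hkmem
  have hspan : Submodule.span ℂ (Set.range ![a, b]) = LinearMap.ker e := by
    apply Submodule.eq_of_le_of_finrank_le
    · rw [Submodule.span_le]
      rintro _ ⟨i, rfl⟩
      fin_cases i
      · exact haker _
      · exact haker _
    · rw [finrank_span_eq_card hind, hker]; simp
  apply ha0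
  apply hnondeg
  intro x
  have hx := haker x
  rw [← hspan, Matrix.range_cons_cons_empty, Submodule.mem_span_pair] at hx
  obtain ⟨s, t, hst⟩ := hx
  rw [ha, sk, ← hst]
  simp [hb, hiso₁ _ hv₁ _ (inv₁ (2 * m - 1) _ hv₁), ha]
end

section
/- Let d = [d_1 ≥ d_2 ≥ ⋯ ≥ d_r] be a partition of 2n lying in P_1(2n), i.e., every even value occurs an even number of times among the parts. Then the transpose partition d^t lies in P_{−1}(2n) (every odd value occurs an even number of times among the parts of d^t) — that is, d is special — if and only if the unique block decomposition of d contains no block of type D2 of the form [α_1, β_1, β_1, …, β_k, β_k, α_2] with k ≥ 1; equivalently, if and only if for every i ≥ 1, no even part of d lies strictly between o_{2i} and o_{2i−1}, where o_1 ≥ o_2 ≥ ⋯ ≥ o_{2s} are the odd parts of d listed in weakly decreasing order with multiplicity. -/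
/-!
Statement 9 (paper's Lemma 2.2, characterization of special type D partitions):
Let `d = [d₁ ≥ ⋯ ≥ d_r]` be a partition of `2n` lying in `P₁(2n)` (every even value
occurs an even number of times).  Then the transpose partition `dᵗ` lies in `P₋₁(2n)`
(every odd value occurs an even number of times) — i.e. `d` is special — if and only
if the block decomposition of `d` contains no block of type D2
`[α₁, β₁, β₁, …, β_k, β_k, α₂]` with `k ≥ 1`; equivalently, if and only if for every
`i ≥ 1` no even part of `d` lies strictly between `o_{2i}` and `o_{2i-1}`, where
`o₁ ≥ o₂ ≥ ⋯` are the odd parts of `d` listed in weakly decreasing order with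
multiplicity.  We formalize the latter (equivalent) condition: for every pair of
positions `a < b` carrying odd parts, with no odd part strictly in between (so that
`d b` immediately follows `d a` in the list of odd parts) and with `d a` of odd rank
among the odd parts (i.e. `d a = o_{2i-1}` and `d b = o_{2i}`), no even part lies
strictly between `d b` and `d a`.
(Parts are indexed by `j ∈ {1, …, r}`; the transpose is
`(dᵗ)_j = #{i ∈ [1,r] : d_i ≥ j}`, whose nonzero parts are those with
`1 ≤ j ≤ d₁ ≤ 2n`.)
-/

theorem aux_mult (n r : ℕ) (d : ℕ → ℕ)
    (hanti : ∀ i j : ℕ, 1 ≤ i → i ≤ j → d j ≤ d i)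
    (hzero : ∀ j, r < j → d j = 0)
    (hsum : ∑ j ∈ Finset.Icc 1 r, d j = 2 * n) (v : ℕ) (hv : 1 ≤ v) :
    ((Finset.Icc 1 (2 * n)).filter
        (fun j => ((Finset.Icc 1 r).filter (fun i => j ≤ d i)).card = v)).card
      = d v - d (v + 1) := by
  rw [← Nat.card_Ioc]
  congr 1
  ext j
  simp only [Finset.mem_filter, Finset.mem_Icc, Finset.mem_Ioc]
  constructor
  · rintro ⟨⟨h1, h2⟩, h3⟩
    constructor
    · by_contra hlt
      push Not at hlt
      have hs : Finset.Icc 1 (v + 1) ⊆ (Finset.Icc 1 r).filter (fun i => j ≤ d i) := by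
        intro i hi
        simp only [Finset.mem_filter, Finset.mem_Icc] at hi ⊢
        have := hanti i (v + 1) hi.1 hi.2
        refine ⟨⟨hi.1, ?_⟩, by omega⟩
        by_contra hr
        have := hzero i (by omega)
        omega
      have := Finset.card_le_card hs
      simp only [Nat.card_Icc] at this
      omega
    · by_contra hlt
      push Not at hlt
      have hs : (Finset.Icc 1 r).filter (fun i => j ≤ d i) ⊆ Finset.Icc 1 (v - 1) := by
        intro i hi
        simp only [Finset.mem_filter, Finset.mem_Icc] at hi ⊢
        refine ⟨hi.1.1, ?_⟩
        by_contra hr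
        have := hanti v i hv (by omega)
        omega
      have := Finset.card_le_card hs
      simp only [Nat.card_Icc] at this
      omega
  · rintro ⟨h1, h2⟩
    have hvr : v ≤ r := by
      by_contra hr
      have := hzero v (by omega)
      omega
    have hle : d v ≤ 2 * n := by
      rw [← hsum]
      exact Finset.single_le_sum (f := d) (fun i _ => Nat.zero_le _)
        (Finset.mem_Icc.2 ⟨hv, hvr⟩)
    refine ⟨⟨by omega, by omega⟩, ?_⟩
    have : (Finset.Icc 1 r).filter (fun i => j ≤ d i) = Finset.Icc 1 v := by
      ext i
      simp only [Finset.mem_filter, Finset.mem_Icc]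
      constructor
      · rintro ⟨⟨h3, h4⟩, h5⟩
        refine ⟨h3, ?_⟩
        by_contra hr
        have := hanti (v + 1) i (by omega) (by omega)
        omega
      · rintro ⟨h3, h4⟩
        have := hanti i v h3 h4
        exact ⟨⟨h3, by omega⟩, by omega⟩
    rw [this]; simp

theorem aux_odd (r : ℕ) (d : ℕ → ℕ)
    (hanti : ∀ i j : ℕ, 1 ≤ i → i ≤ j → d j ≤ d i)
    (hP1 : ∀ v : ℕ, Even v →
      Even (((Finset.Icc 1 r).filter (fun j => d j = v)).card))
    (v : ℕ) (hvr : v ≤ r) (hlt : d (v + 1) < d v) :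
    Even (((Finset.Icc 1 v).filter (fun j => Odd (d j))).card) ↔ Even v := by
  have hE : Even (((Finset.Icc 1 v).filter (fun j => ¬ Odd (d j))).card) := by
    rw [Finset.card_eq_sum_card_image d]
    apply Finset.even_sum
    intro w hw
    obtain ⟨i, hi, rfl⟩ := Finset.mem_image.1 hw
    simp only [Finset.mem_filter, Finset.mem_Icc, Nat.not_odd_iff_even] at hi
    have := hP1 (d i) hi.2
    refine (congrArg (fun s : Finset ℕ => Even s.card) ?_).mpr this
    ext j
    simp only [Finset.mem_filter, Finset.mem_Icc, Nat.not_odd_iff_even]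
    have h1 := hanti i v hi.1.1 hi.1.2
    constructor
    · rintro ⟨⟨⟨h2, h3⟩, h4⟩, h5⟩
      exact ⟨⟨h2, by omega⟩, h5⟩
    · rintro ⟨⟨h2, h3⟩, h4⟩
      refine ⟨⟨⟨h2, ?_⟩, h4 ▸ hi.2⟩, h4⟩
      by_contra hr
      have := hanti (v + 1) j (by omega) (by omega)
      omega
  have hc := Finset.card_filter_add_card_filter_not (s := Finset.Icc 1 v) (fun j => Odd (d j))
  simp only [Nat.card_Icc, Nat.add_sub_cancel] at hc
  rw [Nat.even_iff] at *
  rw [Nat.even_iff]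
  omega

theorem aux_succ (d : ℕ → ℕ) (k : ℕ) :
    ((Finset.Icc 1 (k + 1)).filter (fun j => Odd (d j))).card
      = ((Finset.Icc 1 k).filter (fun j => Odd (d j))).card + if Odd (d (k + 1)) then 1 else 0 := by
  rw [← Finset.insert_Icc_right_eq_Icc_add_one (by omega), Finset.filter_insert]
  split_ifs
  · rw [Finset.card_insert_of_notMem (by simp)]
  · rfl

theorem aux_pairs (d : ℕ → ℕ) (h : ∀ v, Odd v → (Odd (d v) ↔ Odd (d (v + 1)))) (k : ℕ) :
    Even ((Finset.Icc 1 (2 * k)).filter (fun j => Odd (d j))).card := by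
  induction k with
  | zero => simp
  | succ k ih =>
    have := h (2 * k + 1) ⟨k, rfl⟩
    rw [show 2 * (k + 1) = 2 * k + 1 + 1 by ring, aux_succ, aux_succ]
    split_ifs <;> first | tauto | (rw [Nat.even_iff] at *; omega)

theorem typeD_partition_special_iff
    (n r : ℕ) (hn : 1 ≤ n)
    (d : ℕ → ℕ)
    (hanti : ∀ i j : ℕ, 1 ≤ i → i ≤ j → d j ≤ d i)
    (hpos : ∀ j, 1 ≤ j → j ≤ r → 0 < d j)
    (hzero : ∀ j, r < j → d j = 0)
    (hsum : ∑ j ∈ Finset.Icc 1 r, d j = 2 * n)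
    (hP1 : ∀ v : ℕ, Even v →
      Even (((Finset.Icc 1 r).filter (fun j => d j = v)).card)) :
    -- `d` is special, i.e. `dᵗ ∈ P₋₁(2n)`: every odd value occurs an even number of
    -- times among the parts `(dᵗ)_j = #{i ∈ [1,r] : d_i ≥ j}` of the transpose ...
    ((∀ v : ℕ, Odd v →
      Even (((Finset.Icc 1 (2 * n)).filter
        (fun j => ((Finset.Icc 1 r).filter (fun i => j ≤ d i)).card = v)).card))
    ↔
    -- ... iff no even part lies strictly between `o_{2i}` and `o_{2i-1}` (no type D2
    -- block with `k ≥ 1` occurs in the block decomposition of `d`):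
    (∀ a b : ℕ, 1 ≤ a → a < b → b ≤ r → Odd (d a) → Odd (d b) →
      (∀ c, a < c → c < b → Even (d c)) →
      Odd (((Finset.Icc 1 a).filter (fun j => Odd (d j))).card) →
      ∀ c, 1 ≤ c → c ≤ r → Even (d c) → ¬(d b < d c ∧ d c < d a))) := by
  have hr : 1 ≤ r := by
    by_contra h
    have : r = 0 := by omega
    subst this
    simp at hsum
    omega
  have hOr : Even ((Finset.Icc 1 r).filter (fun j => Odd (d j))).card := by
    rw [← Finset.even_sum_iff_even_card_odd, hsum]
    exact even_two_mul n
  have hreven : Even r := (aux_odd r d hanti hP1 r le_rfl (by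
    rw [hzero (r + 1) (by omega)]; exact hpos r hr le_rfl)).1 hOr
  have hL : (∀ v : ℕ, Odd v →
      Even (((Finset.Icc 1 (2 * n)).filter
        (fun j => ((Finset.Icc 1 r).filter (fun i => j ≤ d i)).card = v)).card)) ↔
      ∀ v, Odd v → (Odd (d v) ↔ Odd (d (v + 1))) := by
    refine forall_congr' fun v => forall_congr' fun hv => ?_
    have h1 : 1 ≤ v := hv.pos
    rw [aux_mult n r d hanti hzero hsum v h1]
    have := hanti v (v + 1) h1 (by omega)
    rw [Nat.even_iff, Nat.odd_iff, Nat.odd_iff]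
    omega
  rw [hL]
  constructor
  · intro h a b ha hab hbr hda hdb hbet hrank c hc hcr hce hlt
    have hao : Odd a := by
      by_contra hne
      rw [Nat.not_odd_iff_even] at hne
      obtain ⟨k, hk⟩ := hne
      have := aux_pairs d h k
      rw [show 2 * k = a by omega] at this
      exact Nat.not_even_iff_odd.2 hrank this
    have h1 := (h a hao).1 hda
    have hb : b = a + 1 := by
      by_contra hne
      exact Nat.not_even_iff_odd.2 h1 (hbet (a + 1) (by omega) (by omega))
    rcases Nat.lt_or_ge a c with h2 | h2
    · have := hanti b c (by omega) (by omega)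
      omega
    · have := hanti c a hc h2
      omega
  · intro h v hv
    by_contra hne
    have h1 : 1 ≤ v := hv.pos
    have hvr : v < r := by
      by_contra hge
      have h0 := hzero (v + 1) (by omega)
      by_cases hvr : v = r
      · subst hvr; exact Nat.not_even_iff_odd.2 hv hreven
      · have h0' := hzero v (by omega)
        rw [h0, h0'] at hne
        exact hne Iff.rfl
    have hlt : d (v + 1) < d v := by
      refine lt_of_le_of_ne (hanti v (v + 1) h1 (by omega)) fun he => ?_
      rw [he] at hne
      exact hne Iff.rfl
    have hO := aux_odd r d hanti hP1 v hvr.le hlt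
    have hOv : Odd ((Finset.Icc 1 v).filter (fun j => Odd (d j))).card := by
      rw [← Nat.not_even_iff_odd, hO, Nat.not_even_iff_odd]; exact hv
    obtain ⟨a, ha, hamax⟩ := Finset.exists_max_image _ (fun j => j)
      (Finset.card_pos.1 hOv.pos)
    have hBne : ((Finset.Icc (v + 1) r).filter (fun j => Odd (d j))).Nonempty := by
      by_contra hemp
      rw [Finset.not_nonempty_iff_eq_empty] at hemp
      have heq : (Finset.Icc 1 r).filter (fun j => Odd (d j))
          = (Finset.Icc 1 v).filter (fun j => Odd (d j)) := by
        ext j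
        have := Finset.eq_empty_iff_forall_notMem.1 hemp j
        simp only [Finset.mem_filter, Finset.mem_Icc] at this ⊢
        constructor
        · rintro ⟨h2, h3⟩
          exact ⟨⟨h2.1, by by_contra h4; exact this ⟨⟨by omega, h2.2⟩, h3⟩⟩, h3⟩
        · rintro ⟨h2, h3⟩
          exact ⟨⟨h2.1, by omega⟩, h3⟩
      rw [heq] at hOr
      exact Nat.not_even_iff_odd.2 hOv hOr
    obtain ⟨b, hb, hbmin⟩ := Finset.exists_min_image _ (fun j => j) hBne
    simp only [Finset.mem_filter, Finset.mem_Icc] at ha hb hamax hbmin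
    have hrank : Odd ((Finset.Icc 1 a).filter (fun j => Odd (d j))).card := by
      convert hOv using 2
      ext j
      simp only [Finset.mem_filter, Finset.mem_Icc]
      constructor
      · rintro ⟨h2, h3⟩
        exact ⟨⟨h2.1, by omega⟩, h3⟩
      · rintro ⟨h2, h3⟩
        exact ⟨⟨h2.1, hamax j ⟨h2, h3⟩⟩, h3⟩
    have hbet : ∀ c, a < c → c < b → Even (d c) := by
      intro c hac hcb
      by_contra hc
      rw [Nat.not_even_iff_odd] at hc
      rcases Nat.lt_or_ge v c with h2 | h2
      · have := hbmin c ⟨⟨by omega, by omega⟩, hc⟩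
        omega
      · have := hamax c ⟨⟨by omega, by omega⟩, hc⟩
        omega
    have key := h a b ha.1.1 (by omega) hb.1.2 ha.2 hb.2 hbet hrank
    have hav := hanti a v ha.1.1 ha.1.2
    have hbv := hanti (v + 1) b (by omega) hb.1.1
    have ho1 := Nat.odd_iff.1 ha.2
    have ho2 := Nat.odd_iff.1 hb.2
    rcases Nat.even_or_odd (d v) with he | ho
    · refine key v h1 hvr.le he ⟨by omega, ?_⟩
      rw [Nat.even_iff] at he
      omega
    · have he : Even (d (v + 1)) := by
        rw [← Nat.not_odd_iff_even]; tauto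
      refine key (v + 1) (by omega) hvr he ⟨?_, by omega⟩
      rw [Nat.even_iff] at he
      omega
end

section
/- Let m ≥ 0, let p_1,…,p_m ≥ 1 be integers, and let q ≥ 0 be an even integer with q ≠ 2, such that 2(p_1 + ⋯ + p_m) + q = 2n. Define the partition d′ of 2n by d′_j = 2·#{1 ≤ i ≤ m : p_i ≥ j} + (1 if 1 ≤ j ≤ q, else 0) for j ≥ 1, and let d = (d′)_D ∈ P_1(2n) be the D-collapse of d′. Then the block decomposition of d contains no block of type D2 of the form [α_1, β_1, β_1, …, β_k, β_k, α_2] with k ≥ 1; equivalently, for every i ≥ 1 no even part of d lies strictly between the (2i)-th and the (2i−1)-th largest odd parts of d. Consequently, every block of d consists of exactly two parts, and the number of parts of d is even. -/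
/-!
Statement 10 (item 1 of the paper's Lemma on the structure of Richardson partitions in
type D): Let `m ≥ 0`, `p₁, …, p_m ≥ 1`, and `q ≥ 0` even with `q ≠ 2`, such that
`2(p₁ + ⋯ + p_m) + q = 2n`.  Define the induced partition `d′` of `2n` by
`d′_j = 2·#{i ∈ [1,m] : p_i ≥ j} + [1 ≤ j ≤ q]`, and let `d = (d′)_D ∈ P₁(2n)` be its
D-collapse.  Then the block decomposition of `d` contains no type D2 block
`[α₁, β₁, β₁, …, β_k, β_k, α₂]` with `k ≥ 1`; equivalently, no even part of `d` lies
strictly between the `2i`-th and the `(2i-1)`-st largest odd parts of `d`.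
Consequently every block of `d` has exactly two parts and the number `r` of parts of
`d` is even.

Here the D-collapse is formalized through its standard characterization: `(d′)_D` is
the unique partition in `P₁(2n)` which is dominated by `d′` and dominates every
partition in `P₁(2n)` dominated by `d′` (dominance = all partial sums `≤`).  The
"no type D2 block with `k ≥ 1`" condition is formalized by its stated equivalent:
for all positions `a < b` of odd parts with no odd part strictly between them and
with `d a` of odd rank among the odd parts (so `d a = o_{2i-1}`, `d b = o_{2i}`),
no even part lies strictly between `d b` and `d a`.
-/

open Finset in
theorem aux_pair_card (c : ℕ → ℕ) (v : ℕ) (hpair : ∀ t, (c (2*t+1) = v ↔ c (2*t+2) = v)) (t : ℕ) :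
    Even (((Icc 1 (2*t)).filter (fun j => c j = v)).card) := by
  induction t with
  | zero => simp
  | succ t ih =>
    rw [show 2*(t+1) = 2*t+1+1 by ring, Finset.card_filter, Finset.sum_Icc_succ_top (by omega),
      Finset.sum_Icc_succ_top (by omega), ← Finset.card_filter]
    have := hpair t
    by_cases h : c (2*t+1) = v
    · have h2 := this.1 h
      simp only [h, h2, if_true]
      rw [add_assoc]; exact ih.add (by decide)
    · have h2 : ¬ c (2*t+1+1) = v := fun h' => h (this.2 h')
      simpa [h, h2] using ih

open Finset in
theorem aux_d'sum (m q n : ℕ) (p : ℕ → ℕ)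
    (htotal : 2 * (∑ i ∈ Finset.Icc 1 m, p i) + q = 2 * n) :
    ∑ j ∈ Icc 1 (2*n), (2 * (((Finset.Icc 1 m).filter (fun i => j ≤ p i)).card)
        + (if 1 ≤ j ∧ j ≤ q then 1 else 0)) = 2 * n := by
  rw [Finset.sum_add_distrib, ← Finset.mul_sum]
  have h1 : ∑ j ∈ Icc 1 (2*n), ((Finset.Icc 1 m).filter (fun i => j ≤ p i)).card
      = ∑ i ∈ Finset.Icc 1 m, p i := by
    simp only [Finset.card_filter]
    rw [Finset.sum_comm]
    apply Finset.sum_congr rfl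
    intro i hi
    rw [← Finset.card_filter]
    have hle : p i ≤ ∑ i ∈ Finset.Icc 1 m, p i :=
      Finset.single_le_sum (f := p) (fun _ _ => Nat.zero_le _) hi
    have : (Icc 1 (2*n)).filter (fun j => j ≤ p i) = Icc 1 (p i) := by
      ext j; simp only [mem_filter, mem_Icc]; omega
    rw [this]; simp
  have h2 : ∑ j ∈ Icc 1 (2*n), (if 1 ≤ j ∧ j ≤ q then 1 else 0) = q := by
    rw [← Finset.card_filter]
    have : (Icc 1 (2*n)).filter (fun j => 1 ≤ j ∧ j ≤ q) = Icc 1 q := by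
      ext j; simp only [mem_filter, mem_Icc]; omega
    rw [this]; simp
  rw [h1, h2, htotal]

open Finset in
theorem aux_P1 (r : ℕ) (d : ℕ → ℕ)
    (hanti : ∀ i j : ℕ, 1 ≤ i → i ≤ j → d j ≤ d i)
    (hzero : ∀ j, r < j → d j = 0)
    (hP1 : ∀ v : ℕ, Even v →
      Even (((Finset.Icc 1 r).filter (fun j => d j = v)).card))
    (k : ℕ) (hk : 1 ≤ k) (hlt : d (k+1) < d k) :
    Even (((Icc 1 k).filter (fun j => Even (d j))).card) := by
  have hkr : k ≤ r := by
    by_contra h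
    have := hzero k (by omega)
    omega
  rw [Finset.card_eq_sum_card_image d]
  apply Finset.even_sum
  intro v hv
  rw [mem_image] at hv
  obtain ⟨i, hi, rfl⟩ := hv
  rw [mem_filter, mem_Icc] at hi
  have := hP1 (d i) hi.2
  suffices hS : ((Icc 1 k).filter (fun j => Even (d j))).filter (fun j => d j = d i)
      = (Icc 1 r).filter (fun j => d j = d i) by
    rw [hS]; exact this
  ext j
  simp only [mem_filter, mem_Icc]
  constructor
  · rintro ⟨⟨h1, h2⟩, h3⟩; exact ⟨by omega, h3⟩
  · rintro ⟨h1, h3⟩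
    refine ⟨⟨⟨h1.1, ?_⟩, by rw [h3]; exact hi.2⟩, h3⟩
    by_contra h
    have a1 := hanti (k+1) j (by omega) (by omega)
    have a2 := hanti i k hi.1.1 hi.1.2
    omega

theorem richardson_partition_no_long_D2_block
    (n m q : ℕ) (hn : 1 ≤ n)
    (p : ℕ → ℕ) (hp : ∀ i, 1 ≤ i → i ≤ m → 1 ≤ p i)
    (hq : Even q) (hq2 : q ≠ 2)
    (htotal : 2 * (∑ i ∈ Finset.Icc 1 m, p i) + q = 2 * n)
    (d' : ℕ → ℕ)
    (hd' : ∀ j, d' j =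
      2 * (((Finset.Icc 1 m).filter (fun i => j ≤ p i)).card)
        + (if 1 ≤ j ∧ j ≤ q then 1 else 0))
    (r : ℕ) (d : ℕ → ℕ)
    -- `d` is a partition of `2n` with `r` parts, lying in `P₁(2n) ...`
    (hanti : ∀ i j : ℕ, 1 ≤ i → i ≤ j → d j ≤ d i)
    (hpos : ∀ j, 1 ≤ j → j ≤ r → 0 < d j)
    (hzero : ∀ j, r < j → d j = 0)
    (hsum : ∑ j ∈ Finset.Icc 1 r, d j = 2 * n)
    (hP1 : ∀ v : ℕ, Even v →
      Even (((Finset.Icc 1 r).filter (fun j => d j = v)).card))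
    -- ... dominated by `d′` ...
    (hdom : ∀ k, ∑ j ∈ Finset.Icc 1 k, d j ≤ ∑ j ∈ Finset.Icc 1 k, d' j)
    -- ... and maximal among partitions of `2n` in `P₁(2n)` dominated by `d′`;
    -- this characterizes the D-collapse `d = (d′)_D`:
    (hmax : ∀ (c : ℕ → ℕ) (rc : ℕ),
      (∀ i j : ℕ, 1 ≤ i → i ≤ j → c j ≤ c i) →
      (∀ j, 1 ≤ j → j ≤ rc → 0 < c j) →
      (∀ j, rc < j → c j = 0) →
      (∑ j ∈ Finset.Icc 1 rc, c j = 2 * n) →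
      (∀ v : ℕ, Even v →
        Even (((Finset.Icc 1 rc).filter (fun j => c j = v)).card)) →
      (∀ k, ∑ j ∈ Finset.Icc 1 k, c j ≤ ∑ j ∈ Finset.Icc 1 k, d' j) →
      (∀ k, ∑ j ∈ Finset.Icc 1 k, c j ≤ ∑ j ∈ Finset.Icc 1 k, d j)) :
    -- conclusion: no even part of `d` lies strictly between `o_{2i}` and `o_{2i-1}`
    -- (no type D2 block with `k ≥ 1`), ...
    (∀ a b : ℕ, 1 ≤ a → a < b → b ≤ r → Odd (d a) → Odd (d b) →
      (∀ c, a < c → c < b → Even (d c)) →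
      Odd (((Finset.Icc 1 a).filter (fun j => Odd (d j))).card) →
      ∀ c, 1 ≤ c → c ≤ r → Even (d c) → ¬(d b < d c ∧ d c < d a))
    -- ... and consequently (every block having exactly two parts) the number of
    -- parts of `d` is even:
    ∧ Even r := by
  have hd'anti : ∀ j, 1 ≤ j → d' (j+1) ≤ d' j := by
    intro j hj
    rw [hd', hd']
    have : ((Finset.Icc 1 m).filter (fun i => j+1 ≤ p i)).card
        ≤ ((Finset.Icc 1 m).filter (fun i => j ≤ p i)).card := by
      apply Finset.card_le_card
      intro i
      simp only [Finset.mem_filter]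
      rintro ⟨h1, h2⟩
      exact ⟨h1, by omega⟩
    split_ifs <;> omega
  have hodd : ∀ j, 1 ≤ j → j ≤ q → d' j % 2 = 1 := by
    intro j h1 h2
    rw [hd', if_pos ⟨h1, h2⟩]; omega
  have heven : ∀ j, q < j → d' j % 2 = 0 := by
    intro j h1
    rw [hd', if_neg (by omega)]; omega
  have hd'zero : ∀ j, 2*n < j → d' j = 0 := by
    intro j hj
    rw [hd', if_neg (by omega)]
    have : (Finset.Icc 1 m).filter (fun i => j ≤ p i) = ∅ := by
      apply Finset.filter_eq_empty_iff.2
      intro i hi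
      have hle : p i ≤ ∑ i ∈ Finset.Icc 1 m, p i :=
        Finset.single_le_sum (f := p) (fun _ _ => Nat.zero_le _) hi
      omega
    rw [this]; simp
  have hd'sum : ∑ j ∈ Finset.Icc 1 (2*n), d' j = 2*n := by
    rw [Finset.sum_congr rfl (fun j _ => hd' j)]
    exact aux_d'sum m q n p htotal
  have hq' : q % 2 = 0 := Nat.even_iff.1 hq
  -- the collapse
  obtain ⟨c, hc⟩ : ∃ c : ℕ → ℕ, ∀ j, c j = if j ≤ q then d' j else
      if j % 2 = 1 ∧ d' (j+1) < d' j then d' j - 1 else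
      if j % 2 = 0 ∧ d' j < d' (j-1) then d' j + 1 else d' j := ⟨_, fun _ => rfl⟩
  have hcpair : ∀ t, (c (2*t+1) + c (2*t+2) = d' (2*t+1) + d' (2*t+2)) ∧ c (2*t+1) ≤ d' (2*t+1)
      ∧ c (2*t+2) ≤ c (2*t+1) ∧ ((c (2*t+1) % 2 = 1 ∧ c (2*t+2) % 2 = 1) ∨ c (2*t+1) = c (2*t+2))
      ∧ d' (2*t+2) ≤ c (2*t+2) := by
    intro t
    have e1 := hc (2*t+1)
    have e2 := hc (2*t+2)
    rw [show 2*t+2-1 = 2*t+1 by omega] at e2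
    rw [show 2*t+1+1 = 2*t+2 by omega] at e1
    have a := hd'anti (2*t+1) (by omega)
    rw [show 2*t+1+1 = 2*t+2 by omega] at a
    have o1 := hodd (2*t+1) (by omega)
    have o2 := hodd (2*t+2) (by omega)
    have v1 := heven (2*t+1)
    have v2 := heven (2*t+2)
    by_cases hle : 2*t+1 ≤ q
    · rw [if_pos hle] at e1
      rw [if_pos (by omega)] at e2
      omega
    · rw [if_neg hle] at e1
      rw [if_neg (by omega)] at e2
      split_ifs at e1 e2 <;> omega
  have hcanti : ∀ j, 1 ≤ j → c (j+1) ≤ c j := by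
    intro j hj
    rcases Nat.even_or_odd' j with ⟨t, rfl | rfl⟩
    · obtain ⟨t, rfl⟩ : ∃ s, t = s + 1 := ⟨t-1, by omega⟩
      have h1 := hcpair t
      have h2 := hcpair (t+1)
      have h3 := hd'anti (2*(t+1)) (by omega)
      rw [show 2*t+2 = 2*(t+1) by ring] at h1
      omega
    · exact (hcpair t).2.2.1
  have hcanti' : ∀ i j : ℕ, 1 ≤ i → i ≤ j → c j ≤ c i := by
    intro i j hi hij
    induction j, hij using Nat.le_induction with
    | base => exact le_rfl
    | succ j hj ih => exact (hcanti j (by omega)).trans ih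
  have hczero : ∀ j, 2*n < j → c j = 0 := by
    intro j hj
    have h1 : c (2*n+1) = 0 := by
      have h1 := hcpair n
      have := hd'zero (2*n+1) (by omega)
      omega
    have := hcanti' (2*n+1) j (by omega) hj
    omega
  have hCD : ∀ t, ∑ j ∈ Finset.Icc 1 (2*t), c j = ∑ j ∈ Finset.Icc 1 (2*t), d' j := by
    intro t
    induction t with
    | zero => simp
    | succ t ih =>
      rw [show 2*(t+1) = 2*t+1+1 by ring, Finset.sum_Icc_succ_top (by omega),
        Finset.sum_Icc_succ_top (by omega), Finset.sum_Icc_succ_top (by omega),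
        Finset.sum_Icc_succ_top (by omega), ih]
      have := (hcpair t).1
      rw [show 2*t+1+1 = 2*t+2 by ring]
      omega
  have hcdom : ∀ k, ∑ j ∈ Finset.Icc 1 k, c j ≤ ∑ j ∈ Finset.Icc 1 k, d' j := by
    intro k
    rcases Nat.even_or_odd' k with ⟨t, rfl | rfl⟩
    · exact (hCD t).le
    · rw [Finset.sum_Icc_succ_top (by omega), Finset.sum_Icc_succ_top (by omega), hCD t]
      have := (hcpair t).2.1
      omega
  obtain ⟨rc, hrc1, hrc2, hrcn⟩ : ∃ rc, (∀ j, 1 ≤ j → j ≤ rc → 0 < c j) ∧ (∀ j, rc < j → c j = 0)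
      ∧ rc ≤ 2*n := by
    have hex : ∃ k, c (k+1) = 0 := ⟨2*n, hczero _ (by omega)⟩
    classical
    refine ⟨Nat.find hex, ?_, ?_, ?_⟩
    · intro j h1 h2
      have := Nat.find_min hex (m := j-1) (by omega)
      rw [show j-1+1 = j by omega] at this
      omega
    · intro j hj
      have h1 := Nat.find_spec hex
      have h2 := hcanti' _ j (by omega) (Nat.succ_le_of_lt hj)
      simp only [Nat.succ_eq_add_one] at h2
      omega
    · exact Nat.find_min' hex (hczero _ (by omega))
  have hcsum : ∑ j ∈ Finset.Icc 1 rc, c j = 2 * n := by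
    rw [← hd'sum, ← hCD n]
    apply Finset.sum_subset (Finset.Icc_subset_Icc le_rfl hrcn)
    intro j h1 h2
    simp only [Finset.mem_Icc] at h1 h2
    exact hrc2 j (by omega)
  have hcP1 : ∀ v : ℕ, Even v →
      Even (((Finset.Icc 1 rc).filter (fun j => c j = v)).card) := by
    intro v hv
    have hv' := Nat.even_iff.1 hv
    rcases Nat.eq_zero_or_pos v with h0 | h0
    · have : (Finset.Icc 1 rc).filter (fun j => c j = v) = ∅ := by
        apply Finset.filter_eq_empty_iff.2
        intro j hj
        rw [Finset.mem_Icc] at hj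
        have := hrc1 j hj.1 hj.2
        omega
      rw [this]; simp
    · have : (Finset.Icc 1 rc).filter (fun j => c j = v)
          = (Finset.Icc 1 (2*n)).filter (fun j => c j = v) := by
        ext j
        simp only [Finset.mem_filter, Finset.mem_Icc]
        have := hrc2 j
        omega
      rw [this]
      apply aux_pair_card
      intro t
      have := hcpair t
      omega
  have hCd := hmax c rc hcanti' hrc1 hrc2 hcsum hcP1 hcdom
  have hDD : ∀ t, ∑ j ∈ Finset.Icc 1 (2*t), d j = ∑ j ∈ Finset.Icc 1 (2*t), d' j := by
    intro t
    have h1 := hCd (2*t)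
    have h2 := hdom (2*t)
    have h3 := hCD t
    omega
  have hDev : ∀ t, (∑ j ∈ Finset.Icc 1 (2*t), d j) % 2 = 0 := by
    intro t
    rw [hDD]
    induction t with
    | zero => simp
    | succ t ih =>
      rw [show 2*(t+1) = 2*t+1+1 by ring, Finset.sum_Icc_succ_top (by omega),
        Finset.sum_Icc_succ_top (by omega), show 2*t+1+1 = 2*t+2 by ring]
      have o1 := hodd (2*t+1) (by omega)
      have o2 := hodd (2*t+2) (by omega)
      have v1 := heven (2*t+1)
      have v2 := heven (2*t+2)
      omega
  -- the pair structure of d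
  have hpair : ∀ t, d (2*t+1) % 2 = d (2*t+2) % 2 ∧
      (d (2*t+1) % 2 = 0 → d (2*t+1) = d (2*t+2)) := by
    intro t
    have h1 := hDev t
    have h2 := hDev (t+1)
    rw [show 2*(t+1) = 2*t+1+1 by ring, Finset.sum_Icc_succ_top (by omega),
        Finset.sum_Icc_succ_top (by omega), show 2*t+1+1 = 2*t+2 by ring] at h2
    refine ⟨by omega, fun hev => ?_⟩
    by_contra hne
    have h3 := hanti (2*t+1) (2*t+1+1) (by omega) (by omega)
    have h4 := aux_P1 r d hanti hzero hP1 (2*t+1) (by omega)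
      (lt_of_le_of_ne h3 (fun h => hne h.symm))
    have h5 := Finset.card_filter_add_card_filter_not (s := Finset.Icc 1 (2*t+1))
      (fun j => Even (d j))
    simp only [Nat.not_even_iff_odd, Nat.card_Icc] at h5
    have h6 := Finset.odd_sum_iff_odd_card_odd (s := Finset.Icc 1 (2*t+1)) d
    rw [Nat.even_iff] at h4
    rw [Finset.sum_Icc_succ_top (by omega), Nat.odd_iff, Nat.odd_iff] at h6
    omega
  refine ⟨?_, ?_⟩
  · intro a b ha hab hbr hoa hob hbetween hcount x hx1 hx2 hx3 hx4
    rw [← Finset.odd_sum_iff_odd_card_odd, Nat.odd_iff] at hcount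
    rcases Nat.even_or_odd' a with ⟨t, rfl | rfl⟩
    · have := hDev t
      omega
    · have h1 := (hpair t).1
      rw [Nat.odd_iff] at hoa
      have hb : b = 2*t+2 := by
        by_contra hne
        have := Nat.even_iff.1 (hbetween (2*t+2) (by omega) (by omega))
        omega
      subst hb
      rcases Nat.lt_or_ge (2*t+1) x with h | h
      · have := hanti (2*t+2) x (by omega) h
        omega
      · have := hanti x (2*t+1) hx1 h
        omega
  · rcases Nat.even_or_odd' r with ⟨t, h | h⟩
    · exact ⟨t, by omega⟩
    · exfalso
      have h1 := hpair t
      have h2 := hpos (2*t+1) (by omega) (by omega)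
      have h3 := hzero (2*t+2) (by omega)
      omega
end
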